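/- Let M be a subset of a homogeneous effect algebra E such that M is compatible with covers in the closure M̄ of M. Then M̄ is internally compatible. -/

import Mathlib

/-- An effect algebra: a partial commutative, associative operation `oplus`
(with definedness encoded via `Option`), constants `zero` and `one`,
unique orthosupplements, and `a ⊕ 1` defined only for `a = 0`. -/
structure EffectAlgebra (E : Type*) where
  oplus : E → E → Option E
  zero : E
  one : E
  comm : ∀ a b, oplus a b = oplus b a
  assoc : ∀ a b c ab abc, oplus a b = some ab → oplus ab c = some abc →
    ∃ bc, oplus b c = some bc ∧ oplus a bc = some abc
  compl_exists : ∀ a, ∃ b, oplus a b = some one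
  compl_unique : ∀ a b c, oplus a b = some one → oplus a c = some one → b = c
  add_one : ∀ a b, oplus a one = some b → a = zero

namespace EffectAlgebra

variable {E : Type*} (A : EffectAlgebra E)

/-- `a ⊥ b` : the sum `a ⊕ b` is defined. -/
def Perp (a b : E) : Prop := (A.oplus a b).isSome

/-- `a ≤ b` iff `b = a ⊕ c` for some `c`. -/
def le (a b : E) : Prop := ∃ c, A.oplus a c = some b

/-- The orthosupplement `a'`: the unique `b` with `a ⊕ b = 1`. -/
noncomputable def compl (a : E) : E :=
  @Classical.epsilon E ⟨A.zero⟩ fun b => A.oplus a b = some A.one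

/-- `a ⊖ b` : the unique `c` with `b ⊕ c = a` (defined when `b ≤ a`). -/
noncomputable def ominus (a b : E) : E :=
  @Classical.epsilon E ⟨A.zero⟩ fun c => A.oplus b c = some a

/-- Homogeneity. -/
def Homogeneous : Prop :=
  ∀ u v₁ v₂ s, A.oplus v₁ v₂ = some s → A.le u s → A.le u (A.compl s) →
    ∃ u₁ u₂, A.le u₁ v₁ ∧ A.le u₂ v₂ ∧ A.oplus u₁ u₂ = some u

/-- Riesz decomposition property. -/
def RDP : Prop :=
  ∀ u v₁ v₂ s, A.oplus v₁ v₂ = some s → A.le u s →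
    ∃ u₁ u₂, A.le u₁ v₁ ∧ A.le u₂ v₂ ∧ A.oplus u₁ u₂ = some u

/-- The sum `c₁ ⊕ … ⊕ cₙ` of a finite family (a list); `some s` iff the family
is orthogonal with sum `s`. -/
def sumList : List E → Option E
  | [] => some A.zero
  | x :: xs => (sumList xs).bind fun s => A.oplus x s

/-- The subfamily of `C` indexed by a set of indices `S ⊆ {1,…,n}`. -/
def pickList (C : List E) (S : Finset (Fin C.length)) : List E :=
  (S.sort (· ≤ ·)).map C.get

/-- `C` is an orthogonal cover of `M`. -/
def IsCoverOf (C : List E) (M : Set E) : Prop :=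
  (A.sumList C).isSome ∧
    ∀ a ∈ M, ∃ S : Finset (Fin C.length), A.sumList (pickList C S) = some a

/-- `M` is compatible with covers in `X`: every finite subset of `M` has an
orthogonal cover with range contained in `X`. -/
def CompatWithCoversIn (M X : Set E) : Prop :=
  ∀ F : Finset E, ↑F ⊆ M →
    ∃ C : List E, (∀ c ∈ C, c ∈ X) ∧ A.IsCoverOf C ↑F

/-- `M` is compatible (with covers in `E`). -/
def Compatible (M : Set E) : Prop := A.CompatWithCoversIn M Set.univ

/-- `M` is internally compatible. -/
def InternallyCompatible (M : Set E) : Prop := A.CompatWithCoversIn M M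

/-- `D` is a refinement of `C`: a partition `{P i}` of the index set of `D`
with `C i = ⊕_{j ∈ P i} D j`. -/
def IsRefinement (D C : List E) : Prop :=
  ∃ P : Fin C.length → Finset (Fin D.length),
    (∀ i j, i ≠ j → Disjoint (P i) (P j)) ∧
    (∀ k, ∃ i, k ∈ P i) ∧
    (∀ i, A.sumList (pickList D (P i)) = some (C.get i))

/-- One step of the closure construction `M ↦ M₁`. -/
def closureStep (M : Set E) : Set E :=
  {x | ∃ y ∈ M, A.le x y ∧ A.le x (A.compl y)} ∪
  {z | ∃ y ∈ M, ∃ x, A.le x y ∧ A.le x (A.compl y) ∧ A.oplus x z = some y}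

/-- The sets `Mₙ`. -/
def closureSeq (M : Set E) (n : ℕ) : Set E := (A.closureStep)^[n] M

/-- The closure `M̄ = ⋃ₙ Mₙ`. -/
def closure (M : Set E) : Set E := ⋃ n, A.closureSeq M n

/-- `B` is a sub-effect algebra of `E`. -/
def IsSubEA (B : Set E) : Prop :=
  A.one ∈ B ∧ ∀ a ∈ B, ∀ b ∈ B, A.le b a → A.ominus a b ∈ B

/-- The Riesz decomposition property for (the effect algebra on) a subset `B`. -/
def RDPOn (B : Set E) : Prop :=
  ∀ u v₁ v₂ s, u ∈ B → v₁ ∈ B → v₂ ∈ B → A.oplus v₁ v₂ = some s → A.le u s →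
    ∃ u₁ u₂, u₁ ∈ B ∧ u₂ ∈ B ∧ A.le u₁ v₁ ∧ A.le u₂ v₂ ∧ A.oplus u₁ u₂ = some u

/-- Homogeneity for (the effect algebra on) a subset `B`. -/
def HomogeneousOn (B : Set E) : Prop :=
  ∀ u v₁ v₂ s, u ∈ B → v₁ ∈ B → v₂ ∈ B → A.oplus v₁ v₂ = some s →
    A.le u s → A.le u (A.compl s) →
    ∃ u₁ u₂, u₁ ∈ B ∧ u₂ ∈ B ∧ A.le u₁ v₁ ∧ A.le u₂ v₂ ∧ A.oplus u₁ u₂ = some u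

/-- A block: a maximal sub-effect algebra satisfying the Riesz decomposition
property. -/
def IsBlock (B : Set E) : Prop :=
  A.IsSubEA B ∧ A.RDPOn B ∧
    ∀ B', A.IsSubEA B' → A.RDPOn B' → B ⊆ B' → B' = B

/-- A block of the sub-effect algebra on `F`: a maximal sub-effect algebra of
`F` satisfying the Riesz decomposition property. -/
def IsBlockIn (F B : Set E) : Prop :=
  B ⊆ F ∧ A.IsSubEA B ∧ A.RDPOn B ∧
    ∀ B', B' ⊆ F → A.IsSubEA B' → A.RDPOn B' → B ⊆ B' → B' = B

/-- `a` is sharp: the infimum `a ∧ a'` exists and equals `0`, i.e. every common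
lower bound of `a` and `a'` is `0`. -/
def Sharp (a : E) : Prop :=
  ∀ b, A.le b a → A.le b (A.compl a) → b = A.zero

/-- `a` is sharp in the sub-effect algebra on `F`. -/
def SharpIn (F : Set E) (a : E) : Prop :=
  a ∈ F ∧ ∀ b ∈ F, A.le b a → A.le b (A.compl a) → b = A.zero

/-- `a` is principal. -/
def Principal (a : E) : Prop :=
  ∀ x y s, A.le x a → A.le y a → A.oplus x y = some s → A.le s a

/-- `a` is principal in the sub-effect algebra on `B`. -/
def PrincipalIn (B : Set E) (a : E) : Prop :=
  a ∈ B ∧ ∀ x ∈ B, ∀ y ∈ B, ∀ s, A.le x a → A.le y a →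
    A.oplus x y = some s → A.le s a

/-- `a` is central: principal, and every `b` has a unique decomposition
`b = b₁ ⊕ b₂` with `b₁ ≤ a`, `b₂ ≤ a'`. -/
def Central (a : E) : Prop :=
  A.Principal a ∧ ∀ b, ∃! p : E × E,
    A.le p.1 a ∧ A.le p.2 (A.compl a) ∧ A.oplus p.1 p.2 = some b

/-- `a` is central in the sub-effect algebra on `B`. -/
def CentralIn (B : Set E) (a : E) : Prop :=
  A.PrincipalIn B a ∧ ∀ b ∈ B, ∃! p : E × E,
    p.1 ∈ B ∧ p.2 ∈ B ∧ A.le p.1 a ∧ A.le p.2 (A.compl a) ∧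
      A.oplus p.1 p.2 = some b

/-- The center `C(E)`. -/
def center : Set E := {a | A.Central a}

/-- The compatibility center `K(E)`: the intersection of all blocks. -/
def compatCenter : Set E := {x | ∀ B, A.IsBlock B → x ∈ B}

end EffectAlgebra

namespace EffectAlgebra

section Helpers

variable {E : Type*} (A : EffectAlgebra E)

theorem assocR {b c bc a abc : E} (h1 : A.oplus b c = some bc) (h2 : A.oplus a bc = some abc) :
    ∃ ab, A.oplus a b = some ab ∧ A.oplus ab c = some abc := by
  rw [A.comm] at h1 h2
  obtain ⟨d, h3, h4⟩ := A.assoc _ _ _ _ _ h1 h2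
  rw [A.comm] at h3 h4
  exact ⟨d, h3, h4⟩

theorem compl_spec (a : E) : A.oplus a (A.compl a) = some A.one :=
  Classical.epsilon_spec (p := fun b => A.oplus a b = some A.one) (A.compl_exists a)

theorem oplus_zero (a : E) : A.oplus a A.zero = some a := by
  have h := A.compl_spec A.one
  have h0 : A.compl A.one = A.zero := A.add_one _ _ (by rw [A.comm]; exact h)
  rw [h0] at h
  have h1 := A.compl_spec a
  rw [A.comm] at h1
  obtain ⟨d, h2, h3⟩ := A.assoc _ _ _ _ _ h1 h
  rw [h2, A.compl_unique _ _ _ h3 h1]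

theorem zero_oplus (a : E) : A.oplus A.zero a = some a := by
  rw [A.comm]; exact A.oplus_zero a

theorem cancel {a b c s : E} (h1 : A.oplus a b = some s) (h2 : A.oplus a c = some s) : b = c := by
  have h := A.compl_spec s
  rw [A.comm] at h1 h2
  obtain ⟨p, h3, h4⟩ := A.assoc _ _ _ _ _ h1 h
  obtain ⟨q, h5, h6⟩ := A.assoc _ _ _ _ _ h2 h
  obtain rfl : p = q := by simpa [h3] using h5
  rw [A.comm] at h4 h6
  exact A.compl_unique _ _ _ h4 h6

theorem eq_zero_of_sum {a b : E} (h : A.oplus a b = some A.zero) : a = A.zero := by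
  obtain ⟨d, h1, -⟩ := A.assocR h (A.oplus_zero A.one)
  exact A.add_one _ _ (by rw [A.comm]; exact h1)

theorem perp_of_le_compl {x y : E} (h : A.le x (A.compl y)) : ∃ s, A.oplus x y = some s := by
  obtain ⟨r, h⟩ := h
  obtain ⟨d, h1, -⟩ := A.assocR h (A.compl_spec y)
  exact ⟨d, by rw [A.comm]; exact h1⟩

theorem le_compl_of_perp {x y s : E} (h : A.oplus x y = some s) : A.le x (A.compl y) := by
  rw [A.comm] at h
  obtain ⟨p, h1, h2⟩ := A.assoc _ _ _ _ _ h (A.compl_spec s)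
  rw [A.compl_unique _ _ _ (A.compl_spec y) h2]
  exact ⟨_, h1⟩

theorem perp_mono_left {x x' y s : E} (hx : A.le x' x) (h : A.oplus x y = some s) :
    ∃ t, A.oplus x' y = some t := by
  obtain ⟨r, hr⟩ := hx
  rw [A.comm] at hr
  obtain ⟨t, h1, -⟩ := A.assoc _ _ _ _ _ hr h
  exact ⟨t, h1⟩

theorem perp_mono {x x' y y' s : E} (hx : A.le x' x) (hy : A.le y' y)
    (h : A.oplus x y = some s) : ∃ t, A.oplus x' y' = some t := by
  obtain ⟨t, h1⟩ := A.perp_mono_left hx h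
  rw [A.comm] at h1
  obtain ⟨u, h2⟩ := A.perp_mono_left hy h1
  exact ⟨u, by rw [A.comm]; exact h2⟩

theorem sumList_cons {x t : E} {C : List E} :
    A.sumList (x :: C) = some t ↔ ∃ s, A.sumList C = some s ∧ A.oplus x s = some t := by
  simp [sumList, Option.bind_eq_some_iff]

/-- `a` is a sum of a sublist of `C`. -/
def Cov (C : List E) (a : E) : Prop := ∃ L, L.Sublist C ∧ A.sumList L = some a

theorem cov_iff (C : List E) (a : E) :
    (∃ S : Finset (Fin C.length), A.sumList (pickList C S) = some a) ↔ A.Cov C a := by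
  constructor
  · rintro ⟨S, h⟩
    exact ⟨_, List.map_getElem_sublist (Finset.sortedLT_sort S).pairwise, h⟩
  · rintro ⟨L, h1, h2⟩
    obtain ⟨is, rfl, h3⟩ := List.sublist_eq_map_getElem h1
    refine ⟨is.toFinset, ?_⟩
    have : (is.toFinset.sort (· ≤ ·)) = is :=
      (List.toFinset_sort (· ≤ ·) (h3.imp ne_of_lt)).2 (h3.imp le_of_lt)
    rw [pickList, this]
    exact h2

theorem Cov.skip {C : List E} {a : E} (c : E) (h : A.Cov C a) : A.Cov (c :: C) a := by
  obtain ⟨L, h1, h2⟩ := h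
  exact ⟨L, h1.cons c, h2⟩

theorem Cov.take {C : List E} {a b c : E} (h : A.Cov C a) (hc : A.oplus c a = some b) :
    A.Cov (c :: C) b := by
  obtain ⟨L, h1, h2⟩ := h
  exact ⟨c :: L, h1.cons_cons c, A.sumList_cons.2 ⟨a, h2, hc⟩⟩

theorem cov_cons {C : List E} {c b : E} (h : A.Cov (c :: C) b) :
    A.Cov C b ∨ ∃ a, A.Cov C a ∧ A.oplus c a = some b := by
  obtain ⟨L, h1, h2⟩ := h
  cases h1 with
  | cons _ h1 => exact Or.inl ⟨L, h1, h2⟩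
  | cons_cons _ h1 =>
    obtain ⟨s, h3, h4⟩ := A.sumList_cons.1 h2
    exact Or.inr ⟨s, ⟨_, h1, h3⟩, h4⟩

theorem refine_cover (hH : A.Homogeneous) (X : Set E) (hX : A.closureStep X ⊆ X)
    {L C : List E} (hL : L.Sublist C) :
    ∀ (y x t : E), (∀ c ∈ C, c ∈ X) → A.sumList L = some y → A.le x y →
      A.oplus x y = some t →
      ∃ D : List E, (∀ c ∈ D, c ∈ X) ∧ (∀ a, A.sumList C = some a → A.sumList D = some a) ∧
        (∀ a, A.Cov C a → A.Cov D a) ∧ A.Cov D x ∧ (∀ z, A.oplus x z = some y → A.Cov D z) := by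
  induction hL with
  | slnil =>
    intro y x t _ hy hxy _
    obtain rfl : A.zero = y := by simpa [sumList] using hy
    obtain ⟨r, hr⟩ := hxy
    obtain rfl := A.eq_zero_of_sum hr
    refine ⟨[], by simp, fun _ h => h, fun _ h => h, ⟨[], List.Sublist.slnil, rfl⟩, ?_⟩
    intro z hz
    obtain rfl := A.cancel hz (A.oplus_zero _)
    exact ⟨[], List.Sublist.slnil, rfl⟩
  | @cons L C c _ ih =>
    intro y x t hC hy hxy ht
    obtain ⟨D, h1, h2, h3, h4, h5⟩ := ih y x t (fun c hc => hC c (by simp [hc])) hy hxy ht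
    refine ⟨c :: D, ?_, ?_, ?_, h4.skip A c, fun z hz => (h5 z hz).skip A c⟩
    · intro d hd
      rcases List.mem_cons.1 hd with rfl | hd
      · exact hC _ (by simp)
      · exact h1 _ hd
    · intro a ha
      obtain ⟨s, h6, h7⟩ := A.sumList_cons.1 ha
      exact A.sumList_cons.2 ⟨s, h2 _ h6, h7⟩
    · intro a ha
      rcases A.cov_cons ha with h | ⟨b, h, hb⟩
      · exact (h3 _ h).skip A c
      · exact (h3 _ h).take A hb
  | @cons_cons L C c _ ih =>
    intro y x t hC hy hxy ht
    obtain ⟨s, hs, hcs⟩ := A.sumList_cons.1 hy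
    obtain ⟨x1, x2, hx1, hx2, hx⟩ := hH x c s y hcs hxy (A.le_compl_of_perp ht)
    have hsc : A.oplus s c = some y := by rw [A.comm]; exact hcs
    have hx' : A.oplus x2 x1 = some x := by rw [A.comm]; exact hx
    obtain ⟨t2, ht2⟩ := A.perp_mono ⟨_, hx'⟩ ⟨_, hsc⟩ ht
    obtain ⟨t1, ht1⟩ := A.perp_mono ⟨_, hx⟩ ⟨_, hcs⟩ ht
    obtain ⟨D, h1, h2, h3, h4, h5⟩ := ih s x2 t2 (fun c hc => hC c (by simp [hc])) hs hx2 ht2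
    have hcX : c ∈ X := hC c (by simp)
    have hx1c := A.le_compl_of_perp ht1
    obtain ⟨w, hw⟩ := id hx1
    obtain ⟨v, hv⟩ := hx2
    refine ⟨x1 :: w :: D, ?_, ?_, ?_, (h4.skip A w).take A hx, ?_⟩
    · intro d hd
      rcases List.mem_cons.1 hd with rfl | hd
      · exact hX (Or.inl ⟨c, hcX, hx1, hx1c⟩)
      rcases List.mem_cons.1 hd with rfl | hd
      · exact hX (Or.inr ⟨c, hcX, x1, hx1, hx1c, hw⟩)
      · exact h1 _ hd
    · intro a ha
      obtain ⟨r, h6, h7⟩ := A.sumList_cons.1 ha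
      obtain ⟨q, h8, h9⟩ := A.assoc _ _ _ _ _ hw h7
      exact A.sumList_cons.2 ⟨q, A.sumList_cons.2 ⟨r, h2 _ h6, h8⟩, h9⟩
    · intro a ha
      rcases A.cov_cons ha with h | ⟨b, h, hb⟩
      · exact ((h3 _ h).skip A w).skip A x1
      · obtain ⟨q, h8, h9⟩ := A.assoc _ _ _ _ _ hw hb
        exact ((h3 _ h).take A h8).take A h9
    · intro z hz
      obtain ⟨q, h8, h9⟩ := A.assoc _ _ _ _ _ hw hcs
      obtain ⟨e, h10, h11⟩ := A.assocR hv h8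
      rw [A.comm] at h10
      obtain ⟨f, h12, h13⟩ := A.assoc _ _ _ _ _ h10 h11
      obtain ⟨g, h14, h15⟩ := A.assocR h13 h9
      obtain rfl : g = x := by simpa [h14] using hx
      obtain rfl := A.cancel hz h15
      exact ((h5 v hv).take A h12).skip A x1

theorem subset_closureStep (X : Set E) : X ⊆ A.closureStep X := fun y hy =>
  Or.inr ⟨y, hy, A.zero, ⟨y, A.zero_oplus y⟩, ⟨_, A.zero_oplus _⟩, A.zero_oplus y⟩

theorem closureSeq_succ (M : Set E) (n : ℕ) :
    A.closureSeq M (n + 1) = A.closureStep (A.closureSeq M n) :=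
  Function.iterate_succ_apply' _ _ _

theorem closureSeq_mono (M : Set E) : Monotone (A.closureSeq M) :=
  monotone_nat_of_le_succ fun n => by
    rw [closureSeq_succ]; exact A.subset_closureStep _

theorem closureStep_closure (M : Set E) : A.closureStep (A.closure M) ⊆ A.closure M := by
  rintro z (⟨y, hy, h⟩ | ⟨y, hy, h⟩) <;> obtain ⟨n, hn⟩ := Set.mem_iUnion.1 hy <;>
    refine Set.mem_iUnion.2 ⟨n + 1, ?_⟩ <;> rw [closureSeq_succ]
  · exact Or.inl ⟨y, hn, h⟩
  · exact Or.inr ⟨y, hn, h⟩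

/-- A cover can be refined so as to cover one more step of the closure. -/
theorem refine_many (hH : A.Homogeneous) (X : Set E) (hX : A.closureStep X ⊆ X)
    (F : Finset E) (C : List E) (hCX : ∀ c ∈ C, c ∈ X)
    (hCs : (A.sumList C).isSome)
    (hF : ∀ z ∈ F, ∃ y, A.Cov C y ∧ ∃ x, A.le x y ∧ A.le x (A.compl y) ∧
      (z = x ∨ A.oplus x z = some y)) :
    ∃ D : List E, (∀ c ∈ D, c ∈ X) ∧ (A.sumList D).isSome ∧
      (∀ a, A.Cov C a → A.Cov D a) ∧ ∀ z ∈ F, A.Cov D z := by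
  classical
  induction F using Finset.induction_on with
  | empty => exact ⟨C, hCX, hCs, fun _ h => h, by simp⟩
  | insert z F _ ih =>
    obtain ⟨D, h1, h2, h3, h4⟩ := ih fun z hz => hF z (Finset.mem_insert_of_mem hz)
    obtain ⟨y, hy, x, hxy, hxy', hz⟩ := hF z (Finset.mem_insert_self _ _)
    obtain ⟨L, hL, hLy⟩ := h3 _ hy
    obtain ⟨t, ht⟩ := A.perp_of_le_compl hxy'
    obtain ⟨D', k1, k2, k3, k4, k5⟩ := A.refine_cover hH X hX hL y x t h1 hLy hxy ht
    obtain ⟨s, hs⟩ := Option.isSome_iff_exists.1 h2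
    refine ⟨D', k1, by simp [k2 _ hs], fun a ha => k3 _ (h3 _ ha), ?_⟩
    intro u hu
    rcases Finset.mem_insert.1 hu with rfl | hu
    · rcases hz with rfl | hz
      · exact k4
      · exact k5 _ hz
    · exact k3 _ (h4 _ hu)

theorem step_compat (hH : A.Homogeneous) (X : Set E) (hX : A.closureStep X ⊆ X)
    (N : Set E) (hN : A.CompatWithCoversIn N X) :
    A.CompatWithCoversIn (A.closureStep N) X := by
  classical
  intro F hF
  have key : ∀ z : F, ∃ y ∈ N, ∃ x, A.le x y ∧ A.le x (A.compl y) ∧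
      (z.1 = x ∨ A.oplus x z.1 = some y) := by
    rintro ⟨z, hz⟩
    rcases hF hz with ⟨y, hy, h, h'⟩ | ⟨y, hy, x, h, h', h''⟩
    · exact ⟨y, hy, z, h, h', Or.inl rfl⟩
    · exact ⟨y, hy, x, h, h', Or.inr h''⟩
  choose f hf hf' using key
  obtain ⟨C, hC, hC1, hC2⟩ := hN (Finset.univ.image f) (by
    intro y hy
    simp only [Finset.coe_image, Set.mem_image] at hy
    obtain ⟨z, -, rfl⟩ := hy
    exact hf z)
  obtain ⟨D, h1, h2, -, h4⟩ := A.refine_many hH X hX F C hC hC1 (by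
    intro z hz
    exact ⟨f ⟨z, hz⟩, (A.cov_iff _ _).1 (hC2 _ (by simp)), hf' ⟨z, hz⟩⟩)
  exact ⟨D, h1, h2, fun a ha => (A.cov_iff _ _).2 (h4 a ha)⟩

end Helpers

end EffectAlgebra

/-- If `M` is compatible with covers in `M̄`, then `M̄` is
internally compatible. -/
theorem closure_internally_compatible {E : Type*} (A : EffectAlgebra E)
    (hH : A.Homogeneous) (M : Set E)
    (hM : A.CompatWithCoversIn M (A.closure M)) :
    A.InternallyCompatible (A.closure M) := by
  have hn : ∀ n, A.CompatWithCoversIn (A.closureSeq M n) (A.closure M) := by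
    intro n
    induction n with
    | zero => exact hM
    | succ n ih =>
      rw [A.closureSeq_succ]
      exact A.step_compat hH _ (A.closureStep_closure M) _ ih
  intro F hF
  obtain ⟨n, hFn⟩ : ∃ n, (F : Set E) ⊆ A.closureSeq M n := by
    refine Set.Finite.induction_on_subset _ F.finite_toSet ⟨0, by simp⟩ ?_
    rintro a S ha _ _ ⟨n, hS⟩
    obtain ⟨m, hm⟩ := Set.mem_iUnion.1 (hF ha)
    refine ⟨max n m, Set.insert_subset (A.closureSeq_mono M (le_max_right n m) hm)
      (hS.trans (A.closureSeq_mono M (le_max_left n m)))⟩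
  exact hn n F hFn
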